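/- For every n ≥ 4, every generating set of the group Γ̂_n^4 has at least N_n = C(n,3) − 1 elements; consequently the minimum number of generators of Γ̂_n^4 is exactly N_n. -/

import Mathlib

/-- Ordered quadruples of elements of `Fin n`, used to index the generators `(ijkl)`. -/
abbrev Quad (n : ℕ) : Type := Fin n × Fin n × Fin n × Fin n

/-- The underlying set `{i, j, k, l}` of a quadruple `(i, j, k, l)`. -/
def qFinset {n : ℕ} (q : Quad n) : Finset (Fin n) := {q.1, q.2.1, q.2.2.1, q.2.2.2}

/-- The four entries of the quadruple are pairwise distinct. -/
def qDistinct {n : ℕ} (q : Quad n) : Prop := (qFinset q).card = 4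

/-- The defining relators of the group `Γ̂_n^4` of Kim–Manturov:
generators indexed by quadruples of distinct elements (non-distinct quadruples are killed),
commutativity relations (2), signed pentagon relations (3') and signed dihedral
relations (4'). -/
def gammaHatRels (n : ℕ) : Set (FreeGroup (Quad n)) :=
  {w | ∃ q : Quad n, ¬ qDistinct q ∧ w = FreeGroup.of q} ∪
  {w | ∃ q r : Quad n, qDistinct q ∧ qDistinct r ∧ (qFinset q ∩ qFinset r).card ≤ 2 ∧
      w = FreeGroup.of q * FreeGroup.of r * (FreeGroup.of q)⁻¹ * (FreeGroup.of r)⁻¹} ∪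
  {w | ∃ i j k l m : Fin n, ({i, j, k, l, m} : Finset (Fin n)).card = 5 ∧
      w = FreeGroup.of (i, j, k, l) * FreeGroup.of (i, j, l, m) * FreeGroup.of (j, k, l, m) *
        (FreeGroup.of (i, j, k, m))⁻¹ * (FreeGroup.of (i, k, l, m))⁻¹} ∪
  {w | ∃ i j k l : Fin n, qDistinct (i, j, k, l) ∧
      (w = FreeGroup.of (i, j, k, l) * FreeGroup.of (j, k, l, i) ∨
       w = FreeGroup.of (i, j, k, l) * FreeGroup.of (l, k, j, i))}

/-- The group `Γ̂_n^4` of Kim–Manturov. -/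
abbrev GammaHat (n : ℕ) : Type := PresentedGroup (gammaHatRels n)

/-- The generator `(ijkl)` of `Γ̂_n^4`. -/
def gh {n : ℕ} (q : Quad n) : GammaHat n := PresentedGroup.of q


theorem card4 {n : ℕ} {i j k l : Fin n} (h : qDistinct (i, j, k, l)) :
    i ≠ j ∧ i ≠ k ∧ i ≠ l ∧ j ≠ k ∧ j ≠ l ∧ k ≠ l := by
  unfold qDistinct qFinset at h
  simp only at h
  refine ⟨?_, ?_, ?_, ?_, ?_, ?_⟩ <;> rintro rfl <;>
  · have := @Finset.card_le_three (Fin n) _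
    simp at h
    first
      | (have h1 := this (a := i) (b := k) (c := l); omega)
      | (have h1 := this (a := i) (b := j) (c := l); omega)
      | (have h1 := this (a := i) (b := j) (c := k); omega)
      | (have h1 := this (a := j) (b := i) (c := l); omega)
      | (have h1 := this (a := j) (b := k) (c := i); omega)
      | (have h1 := this (a := i) (b := k) (c := j); omega)

theorem mk4 {n : ℕ} {i j k l : Fin n}
    (h : i ≠ j ∧ i ≠ k ∧ i ≠ l ∧ j ≠ k ∧ j ≠ l ∧ k ≠ l) : qDistinct (i, j, k, l) := by
  obtain ⟨h1, h2, h3, h4, h5, h6⟩ := h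
  unfold qDistinct qFinset
  simp [Finset.card_insert_of_notMem, *]

theorem card5 {n : ℕ} {i j k l m : Fin n} (h : ({i, j, k, l, m} : Finset (Fin n)).card = 5) :
    i ≠ j ∧ i ≠ k ∧ i ≠ l ∧ i ≠ m ∧ j ≠ k ∧ j ≠ l ∧ j ≠ m ∧ k ≠ l ∧ k ≠ m ∧ l ≠ m := by
  have h4 := @Finset.card_le_four (Fin n) _
  have hi : i ∉ ({j, k, l, m} : Finset (Fin n)) := by
    intro hi
    rw [Finset.insert_eq_of_mem hi] at h
    have := h4 (a := j) (b := k) (c := l) (d := m)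
    omega
  rw [Finset.card_insert_of_notMem hi] at h
  have := card4 (i := j) (j := k) (k := l) (l := m) (by unfold qDistinct qFinset; simp only; omega)
  simp at hi
  tauto

theorem mk5 {n : ℕ} {i j k l m : Fin n}
    (h : i ≠ j ∧ i ≠ k ∧ i ≠ l ∧ i ≠ m ∧ j ≠ k ∧ j ≠ l ∧ j ≠ m ∧ k ≠ l ∧ k ≠ m ∧ l ≠ m) :
    ({i, j, k, l, m} : Finset (Fin n)).card = 5 := by
  obtain ⟨h1, h2, h3, h4, h5, h6, h7, h8, h9, h10⟩ := h
  simp [Finset.card_insert_of_notMem, *]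

/-! ### Lower bound -/

abbrev Tri (n : ℕ) : Type := {T : Finset (Fin n) // T.card = 3}

def eT {n : ℕ} (T : Finset (Fin n)) : Tri n → ℚ := fun t => if t.1 = T then 1 else 0

open Classical in
noncomputable def fQ {n : ℕ} (q : Quad n) : Tri n → ℚ :=
  if qDistinct q then
    eT {q.1, q.2.1, q.2.2.1} + eT {q.1, q.2.2.1, q.2.2.2} - eT {q.2.1, q.2.2.1, q.2.2.2}
      - eT {q.1, q.2.1, q.2.2.2}
  else 0

theorem fQ_dist {n : ℕ} {i j k l : Fin n}
    (h : i ≠ j ∧ i ≠ k ∧ i ≠ l ∧ j ≠ k ∧ j ≠ l ∧ k ≠ l) :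
    fQ (i, j, k, l) = eT {i, j, k} + eT {i, k, l} - eT {j, k, l} - eT {i, j, l} := by
  unfold fQ
  rw [if_pos (mk4 h)]

theorem rot3 {n : ℕ} (i j k : Fin n) : ({i, j, k} : Finset (Fin n)) = {k, i, j} := by
  ext x; simp; tauto

theorem rev3 {n : ℕ} (i j k : Fin n) : ({i, j, k} : Finset (Fin n)) = {k, j, i} := by
  ext x; simp; tauto

theorem phi_rels {n : ℕ} : ∀ r ∈ gammaHatRels n,
    FreeGroup.lift (fun q : Quad n => Multiplicative.ofAdd (fQ q)) r = 1 := by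
  rintro r (((⟨q, hq, rfl⟩ | ⟨q, s, -, -, -, rfl⟩) | ⟨i, j, k, l, m, h, rfl⟩) | ⟨i, j, k, l, h, h'⟩)
  · simp [fQ, hq]
  · simp
  · have h := card5 h
    simp only [map_mul, map_inv, FreeGroup.lift_apply_of]
    rw [fQ_dist (by tauto), fQ_dist (by tauto), fQ_dist (by tauto), fQ_dist (by tauto),
      fQ_dist (by tauto)]
    rw [← ofAdd_neg, ← ofAdd_neg, ← ofAdd_add, ← ofAdd_add, ← ofAdd_add, ← ofAdd_add, ← ofAdd_zero]
    congr 1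
    abel
  · have h := card4 h
    rcases h' with rfl | rfl
    · simp only [map_mul, FreeGroup.lift_apply_of]
      rw [fQ_dist (by tauto), fQ_dist (by tauto), ← ofAdd_add, ← ofAdd_zero]
      congr 1
      rw [rot3 j l i, rot3 k l i, rot3 j k i, rot3 i j l]
      rw [rot3 l i j]
      rw [rot3 i k l, rot3 l i k, rot3 k l i]
      abel_nf
    · simp only [map_mul, FreeGroup.lift_apply_of]
      rw [fQ_dist (by tauto), fQ_dist (by tauto), ← ofAdd_add, ← ofAdd_zero]
      congr 1
      rw [rev3 l k j, rev3 l j i, rev3 k j i, rev3 l k i]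
      abel

noncomputable def phi (n : ℕ) : GammaHat n →* Multiplicative (Tri n → ℚ) :=
  PresentedGroup.toGroup phi_rels

theorem phi_gh {n : ℕ} (q : Quad n) : phi n (gh q) = Multiplicative.ofAdd (fQ q) :=
  PresentedGroup.toGroup.of phi_rels

theorem eT_diff {n : ℕ} (W : Submodule ℚ (Tri n → ℚ)) (hW : ∀ q, fQ q ∈ W) {i j k l : Fin n}
    (h : i ≠ j ∧ i ≠ k ∧ i ≠ l ∧ j ≠ k ∧ j ≠ l ∧ k ≠ l) : eT {i, j, k} - eT {i, j, l} ∈ W := by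
  have h1 := hW (i, j, k, l)
  have h2 := hW (j, i, k, l)
  rw [fQ_dist h] at h1
  rw [fQ_dist (by tauto), Finset.insert_comm j i {k}, Finset.insert_comm j i {l}] at h2
  have h3 := W.smul_mem (1/2 : ℚ) (W.add_mem h1 h2)
  convert h3 using 1
  module

theorem eT_conn {n : ℕ} (W : Submodule ℚ (Tri n → ℚ)) (hW : ∀ q, fQ q ∈ W)
    (T₀ : Finset (Fin n)) (h₀ : T₀.card = 3) (hT₀ : eT T₀ ∈ W) :
    ∀ d : ℕ, ∀ T : Finset (Fin n), T.card = 3 → (T \ T₀).card = d → eT T ∈ W := by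
  intro d
  induction d with
  | zero =>
    intro T hT hd
    have : T ⊆ T₀ := by rwa [Finset.card_eq_zero, Finset.sdiff_eq_empty_iff_subset] at hd
    rw [Finset.eq_of_subset_of_card_le this (by omega)]
    exact hT₀
  | succ d ih =>
    intro T hT hd
    obtain ⟨x, hx⟩ : (T \ T₀).Nonempty := by rw [← Finset.card_pos]; omega
    have hc : (T₀ \ T).card = (T \ T₀).card := Finset.card_sdiff_comm (by omega)
    obtain ⟨y, hy⟩ : (T₀ \ T).Nonempty := by rw [← Finset.card_pos]; omega
    rw [Finset.mem_sdiff] at hx hy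
    have he : (T.erase x).card = 2 := by rw [Finset.card_erase_of_mem hx.1]; omega
    obtain ⟨a, b, hab, hE⟩ := Finset.card_eq_two.mp he
    have ha : a ∈ T.erase x := by rw [hE]; simp
    have hb : b ∈ T.erase x := by rw [hE]; simp
    have hTe : T = {a, b, x} := by
      rw [← Finset.insert_erase hx.1, hE]; exact (rot3 a b x).symm
    rw [Finset.mem_erase] at ha hb
    have hay : a ≠ y := by rintro rfl; exact hy.2 ha.2
    have hby : b ≠ y := by rintro rfl; exact hy.2 hb.2
    have hxy : x ≠ y := by rintro rfl; exact hy.2 hx.1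
    have h1 := eT_diff W hW (i := a) (j := b) (k := x) (l := y) ⟨hab, ha.1, hay, hb.1, hby, hxy⟩
    have h2 : eT ({a, b, y} : Finset (Fin n)) ∈ W := by
      apply ih
      · rw [Finset.card_eq_three]; exact ⟨a, b, y, hab, hay, hby, rfl⟩
      · have : ({a, b, y} : Finset (Fin n)) \ T₀ = (T \ T₀).erase x := by
          rw [rot3, ← hE]
          ext z
          simp only [Finset.mem_sdiff, Finset.mem_insert, Finset.mem_erase]
          constructor
          · rintro ⟨rfl | h, h'⟩
            · exact absurd hy.1 h'
            · tauto
          · tauto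
        rw [this, Finset.card_erase_of_mem (by rw [Finset.mem_sdiff]; exact hx)]; omega
    rw [hTe]
    simpa using W.add_mem h1 h2

theorem lower {n : ℕ} (hn : 4 ≤ n) (S : Set (GammaHat n)) (hS : S.Finite)
    (hc : Subgroup.closure S = ⊤) : n.choose 3 - 1 ≤ S.ncard := by
  classical
  obtain ⟨T₀, -, h₀⟩ := Finset.exists_subset_card_eq (s := (Finset.univ : Finset (Fin n))) (n := 3)
    (by simp; omega)
  let F : Finset (Tri n → ℚ) :=
    insert (eT T₀) (hS.toFinset.image fun g => Multiplicative.toAdd (phi n g))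
  let W : Submodule ℚ (Tri n → ℚ) := Submodule.span ℚ (F : Set (Tri n → ℚ))
  have hg : ∀ g : GammaHat n, Multiplicative.toAdd (phi n g) ∈ W := by
    intro g
    have hgm : g ∈ Subgroup.closure S := by rw [hc]; trivial
    induction hgm using Subgroup.closure_induction with
    | mem x hx =>
      apply Submodule.subset_span
      simp only [F, Finset.coe_insert, Finset.coe_image]
      right
      exact ⟨x, by simpa using hx, rfl⟩
    | one => simp
    | mul x y _ _ hx hy => rw [map_mul, toAdd_mul]; exact W.add_mem hx hy
    | inv x _ hx => rw [map_inv, toAdd_inv]; exact W.neg_mem hx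
  have hW : ∀ q, fQ q ∈ W := by
    intro q
    have := hg (gh q)
    rwa [phi_gh] at this
  have h0W : eT T₀ ∈ W := Submodule.subset_span (by simp [F])
  have htop : W = ⊤ := by
    rw [eq_top_iff, ← (Pi.basisFun ℚ (Tri n)).span_eq, Submodule.span_le]
    rintro _ ⟨t, rfl⟩
    have := eT_conn W hW T₀ h₀ h0W _ t.1 t.2 rfl
    have hh : (Pi.basisFun ℚ (Tri n)) t = eT t.1 := by
      ext s
      simp [eT, Pi.single_apply, Subtype.ext_iff]
    rw [hh]
    exact this
  have hfr : Module.finrank ℚ W ≤ F.card := finrank_span_finset_le_card F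
  rw [htop, finrank_top, Module.finrank_fintype_fun_eq_card, Fintype.card_finset_len,
    Fintype.card_fin] at hfr
  have h1 : F.card ≤ (hS.toFinset.image fun g => Multiplicative.toAdd (phi n g)).card + 1 :=
    Finset.card_insert_le _ _
  have h2 := Finset.card_image_le (s := hS.toFinset) (f := fun g => Multiplicative.toAdd (phi n g))
  rw [← Set.ncard_eq_toFinset_card S hS] at h2
  omega

/-! ### Upper bound -/

structure Cl (n : ℕ) (P : ℕ → ℕ → ℕ → ℕ → Prop) : Prop where
  sw1 : ∀ {a b c d}, P a b c d → P b a c d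
  sw2 : ∀ {a b c d}, P a b c d → P c d a b
  pent : ∀ {i j k l m}, i < n → j < n → k < n → l < n → m < n →
    i ≠ j → i ≠ k → i ≠ l → i ≠ m → j ≠ k → j ≠ l → j ≠ m → k ≠ l → k ≠ m → l ≠ m →
    P i k j l → P j l k m → P k m i l → P i l j m → P j m i k

theorem Cl.sw3 {n P} (h : Cl n P) {a b c d} (hp : P a b c d) : P a b d c :=
  h.sw2 (h.sw1 (h.sw2 hp))

def Adds (n k : ℕ) (Q Q' : (ℕ → ℕ → ℕ → ℕ → Prop) → Prop) : Prop :=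
  ∃ S : Finset (ℕ × ℕ × ℕ × ℕ), S.card ≤ k ∧
    ∀ P, Cl n P → Q P → (∀ s ∈ S, P s.1 s.2.1 s.2.2.1 s.2.2.2) → Q' P

theorem Adds.trans {n k l Q Q' Q''} (h : Adds n k Q Q') (h' : Adds n l Q' Q'') :
    Adds n (k + l) Q Q'' := by
  obtain ⟨S, hS, h⟩ := h
  obtain ⟨S', hS', h'⟩ := h'
  refine ⟨S ∪ S', (Finset.card_union_le _ _).trans (by omega), fun P hP hQ hs => ?_⟩
  exact h' P hP (h P hP hQ fun s hs' => hs s (Finset.mem_union_left _ hs'))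
    fun s hs' => hs s (Finset.mem_union_right _ hs')

def All (t : ℕ) (P : ℕ → ℕ → ℕ → ℕ → Prop) : Prop :=
  ∀ a b c d, a < t → b < t → c < t → d < t →
    a ≠ b → a ≠ c → a ≠ d → b ≠ c → b ≠ d → c ≠ d → P a b c d

def KK (m p : ℕ) (P : ℕ → ℕ → ℕ → ℕ → Prop) : Prop :=
  All m P ∧ ∀ a b c, a < p → b < p → c < p → a ≠ b → a ≠ c → b ≠ c → P a b c m

def XX (m q r : ℕ) (P : ℕ → ℕ → ℕ → ℕ → Prop) : Prop :=
  KK m q P ∧ ∀ a b, a < r → b < r → a ≠ b → P a b q m ∧ P a q b m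

section steps
variable {n m q r : ℕ} {P : ℕ → ℕ → ℕ → ℕ → Prop}

/-- two `x` give a `y` -/
theorem xx_y (hP : Cl n P) (hm : m < n) (hq : q < m) (hK : KK m q P) {a b c : ℕ}
    (ha : a < q) (hb : b < q) (hc : c < q) (hab : a ≠ b) (hac : a ≠ c) (hbc : b ≠ c)
    (h1 : P a b q m) (h2 : P a c q m) : P b q c m := by
  -- cycle cm - ab - qm - ac - bq - cm
  have e1 : P a b c m := hK.2 a b c ha hb hc hab hac hbc
  have e2 : P a c b q := hK.1 a c b q (by omega) (by omega) (by omega) (by omega)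
    (by omega) (by omega) (by omega) (by omega) (by omega) (by omega)
  exact hP.pent (i := c) (j := b) (k := m) (l := a) (m := q) (by omega) (by omega) (by omega)
    (by omega) (by omega) (by omega) (by omega) (by omega) (by omega) (by omega) (by omega)
    (by omega) (by omega) (by omega) (by omega)
    (hP.sw3 (hP.sw2 e1)) (hP.sw1 (hP.sw3 h1)) (hP.sw1 (hP.sw3 (hP.sw2 h2))) (hP.sw1 e2)

theorem xy_x (hP : Cl n P) (hm : m < n) (hq : q < m) (hK : KK m q P) {a b c : ℕ}
    (ha : a < q) (hb : b < q) (hc : c < q) (hab : a ≠ b) (hac : a ≠ c) (hbc : b ≠ c)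
    (h1 : P a b q m) (h2 : P b q c m) : P a c q m := by
  have e1 : P a b c m := hK.2 a b c ha hb hc hab hac hbc
  have e2 : P a c b q := hK.1 a c b q (by omega) (by omega) (by omega) (by omega)
    (by omega) (by omega) (by omega) (by omega) (by omega) (by omega)
  exact hP.sw2 (hP.pent (i := a) (j := q) (k := c) (l := b) (m := m) (by omega) (by omega) (by omega)
    (by omega) (by omega) (by omega) (by omega) (by omega) (by omega) (by omega) (by omega)
    (by omega) (by omega) (by omega) (by omega)
    (hP.sw3 e2) (hP.sw1 h2) (hP.sw2 e1) h1)

theorem X_base (hm : m < n) (hq : q < m) (h3 : 3 ≤ q) : Adds n 3 (KK m q) (XX m q 3) := by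
  refine ⟨{(0, 1, q, m), (0, 2, q, m), (1, 2, q, m)}, Finset.card_le_three, ?_⟩
  intro P hP hK hs
  have h01 : P 0 1 q m := hs (0, 1, q, m) (by simp)
  have h02 : P 0 2 q m := hs (0, 2, q, m) (by simp)
  have h12 : P 1 2 q m := hs (1, 2, q, m) (by simp)
  have hx : ∀ a b, a < 3 → b < 3 → a ≠ b → P a b q m := by
    intro a b ha hb hab
    interval_cases a <;> interval_cases b <;>
      first
        | omega
        | assumption
        | (apply hP.sw1; assumption)
  refine ⟨hK, fun a b ha hb hab => ⟨hx a b ha hb hab, ?_⟩⟩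
  obtain ⟨c, hc, hca, hcb⟩ : ∃ c, c < 3 ∧ c ≠ a ∧ c ≠ b := by
    interval_cases a <;> interval_cases b <;>
      first
        | omega
        | exact ⟨0, by omega⟩
        | exact ⟨1, by omega⟩
        | exact ⟨2, by omega⟩
  exact xx_y hP hm hq hK (by omega) (by omega) (by omega) hca hcb hab
    (hx c a hc ha hca) (hx c b hc hb hcb)

theorem X_step (hm : m < n) (hq : q < m) (h3 : 3 ≤ r) (hr : r < q) :
    Adds n 1 (XX m q r) (XX m q (r + 1)) := by
  refine ⟨{(0, r, q, m)}, by simp, ?_⟩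
  intro P hP ⟨hK, hX⟩ hs
  have h0 : P 0 r q m := hs (0, r, q, m) (by simp)
  have hy : ∀ b, b < r → b ≠ 0 → P r q b m ∧ P b q r m := by
    intro b hb hb0
    have hb' := (hX 0 b (by omega) hb (by omega)).1
    exact ⟨xx_y hP hm hq hK (by omega) (by omega) (by omega) (by omega) (by omega) (by omega) h0 hb',
      xx_y hP hm hq hK (by omega) (by omega) (by omega) (by omega) (by omega) (by omega) hb' h0⟩
  have hx : ∀ a, a < r → P a r q m := by
    intro a ha
    by_cases ha0 : a = 0
    · rw [ha0]; exact h0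
    obtain ⟨b, hb, hb0, hba⟩ : ∃ b, b < r ∧ b ≠ 0 ∧ b ≠ a := by
      by_cases h : a = 1
      · exact ⟨2, by omega⟩
      · exact ⟨1, by omega⟩
    exact xy_x hP hm hq hK (b := b) (by omega) (by omega) (by omega) (by omega) (by omega) (by omega)
      (hX a b ha hb (by omega)).1 (hy b hb hb0).2
  have hy' : ∀ b, b < r → P r q b m ∧ P b q r m := by
    intro b hb
    by_cases hb0 : b = 0
    · subst hb0
      have h10 := (hX 1 0 (by omega) (by omega) (by omega)).1
      have h1r := hx 1 (by omega)
      exact ⟨xx_y hP hm hq hK (by omega) (by omega) (by omega) (by omega) (by omega) (by omega) h1r h10,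
        xx_y hP hm hq hK (by omega) (by omega) (by omega) (by omega) (by omega) (by omega) h10 h1r⟩
    · exact hy b hb hb0
  refine ⟨hK, fun a b ha hb hab => ?_⟩
  by_cases har : a = r
  · subst har
    exact ⟨hP.sw1 (hx b (by omega)), (hy' b (by omega)).1⟩
  by_cases hbr : b = r
  · subst hbr
    exact ⟨hx a (by omega), (hy' a (by omega)).2⟩
  exact hX a b (by omega) (by omega) hab

theorem X_all (hm : m < n) (hq : q < m) (h3 : 3 ≤ r) (hr : r ≤ q) :
    Adds n r (KK m q) (XX m q r) := by
  induction r, h3 using Nat.le_induction with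
  | base => exact X_base hm hq hr
  | succ r h3 ih => exact (ih (by omega)).trans (X_step hm hq h3 (by omega))

theorem K_step (hm : m < n) (hq : q < m) (h3 : 3 ≤ q) : Adds n q (KK m q) (KK m (q + 1)) := by
  obtain ⟨S, hS, h⟩ := X_all (r := q) hm hq h3 le_rfl
  refine ⟨S, hS, fun P hP hQ hs => ?_⟩
  obtain ⟨hK, hX⟩ := h P hP hQ hs
  refine ⟨hK.1, fun a b c ha hb hc hab hac hbc => ?_⟩
  by_cases h1 : a = q
  · subst h1
    exact hP.sw1 (hX b c (by omega) (by omega) hbc).2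
  by_cases h2 : b = q
  · subst h2
    exact (hX a c (by omega) (by omega) hac).2
  by_cases h3 : c = q
  · subst h3
    exact (hX a b (by omega) (by omega) hab).1
  exact hK.2 a b c (by omega) (by omega) (by omega) hab hac hbc

theorem K_base : Adds n 3 (All m) (KK m 3) := by
  refine ⟨{(0, 1, 2, m), (0, 2, 1, m), (1, 2, 0, m)}, Finset.card_le_three, ?_⟩
  intro P hP hA hs
  have h01 : P 0 1 2 m := hs (0, 1, 2, m) (by simp)
  have h02 : P 0 2 1 m := hs (0, 2, 1, m) (by simp)
  have h12 : P 1 2 0 m := hs (1, 2, 0, m) (by simp)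
  refine ⟨hA, fun a b c ha hb hc hab hac hbc => ?_⟩
  interval_cases a <;> interval_cases b <;> first
    | omega
    | (interval_cases c <;> first
        | omega
        | assumption
        | (apply hP.sw1; assumption))

theorem K_all (hm : m < n) (h3 : 3 ≤ q) (hq : q ≤ m) :
    Adds n (q.choose 2) (All m) (KK m q) := by
  induction q, h3 using Nat.le_induction with
  | base => exact K_base
  | succ q h3 ih =>
    have := (ih (by omega)).trans (K_step hm (by omega) h3)
    rwa [Nat.choose_succ_succ' q 1, Nat.choose_one_right, add_comm q]

theorem All_step (h3 : 3 ≤ m) (hm : m < n) :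
    Adds n (m.choose 2) (All m) (All (m + 1)) := by
  obtain ⟨S, hS, h⟩ := K_all (q := m) hm h3 le_rfl
  refine ⟨S, hS, fun P hP hQ hs => ?_⟩
  obtain ⟨hA, hK⟩ := h P hP hQ hs
  intro a b c d ha hb hc hd hab hac had hbc hbd hcd
  by_cases h4 : d = m
  · subst h4
    exact hK a b c (by omega) (by omega) (by omega) hab hac hbc
  by_cases h3 : c = m
  · subst h3
    exact hP.sw3 (hK a b d (by omega) (by omega) (by omega) hab had hbd)
  by_cases h2 : b = m
  · subst h2
    exact hP.sw2 (hK c d a (by omega) (by omega) (by omega) hcd (by omega) (by omega))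
  by_cases h1 : a = m
  · subst h1
    exact hP.sw1 (hP.sw2 (hK c d b (by omega) (by omega) (by omega) hcd (by omega) (by omega)))
  exact hA a b c d (by omega) (by omega) (by omega) (by omega) hab hac had hbc hbd hcd

theorem All_all (h3 : 3 ≤ m) (hm : m ≤ n) :
    Adds n (m.choose 3 - 1) (fun _ => True) (All m) := by
  induction m, h3 using Nat.le_induction with
  | base =>
    refine ⟨∅, by simp, fun P hP _ _ => ?_⟩
    intro a b c d
    omega
  | succ m h3 ih =>
    have := (ih (by omega)).trans (All_step h3 (by omega))
    have hp : 0 < m.choose 3 := Nat.choose_pos h3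
    have e : (m + 1).choose 3 - 1 = m.choose 3 - 1 + m.choose 2 := by
      rw [Nat.choose_succ_succ' m 2]; norm_num; omega
    rwa [e]

end steps

theorem gh_rel {n : ℕ} {w : FreeGroup (Quad n)} (h : w ∈ gammaHatRels n) :
    PresentedGroup.mk (gammaHatRels n) w = 1 :=
  PresentedGroup.one_of_mem h

theorem gh_not {n : ℕ} {q : Quad n} (h : ¬ qDistinct q) : gh q = 1 :=
  gh_rel (w := FreeGroup.of q) (Or.inl (Or.inl (Or.inl ⟨q, h, rfl⟩)))

theorem qD_rot {n : ℕ} {i j k l : Fin n} (h : qDistinct (i, j, k, l)) : qDistinct (j, k, l, i) := by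
  have := card4 h
  exact mk4 (by tauto)

theorem qD_rev {n : ℕ} {i j k l : Fin n} (h : qDistinct (i, j, k, l)) : qDistinct (l, k, j, i) := by
  have := card4 h
  exact mk4 (by tauto)

theorem gh_rot {n : ℕ} (i j k l : Fin n) : gh (i, j, k, l) = (gh (j, k, l, i))⁻¹ := by
  by_cases h : qDistinct (i, j, k, l)
  · have := gh_rel (Or.inr ⟨i, j, k, l, h, Or.inl rfl⟩)
    rw [map_mul] at this
    exact eq_inv_of_mul_eq_one_left this
  · rw [gh_not h, gh_not (fun h' => h (qD_rot (qD_rot (qD_rot h')))), inv_one]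

theorem gh_rev {n : ℕ} (i j k l : Fin n) : gh (i, j, k, l) = (gh (l, k, j, i))⁻¹ := by
  by_cases h : qDistinct (i, j, k, l)
  · have := gh_rel (Or.inr ⟨i, j, k, l, h, Or.inr rfl⟩)
    rw [map_mul] at this
    exact eq_inv_of_mul_eq_one_left this
  · rw [gh_not h, gh_not (fun h' => h (qD_rev h')), inv_one]

theorem gh_pent {n : ℕ} {i j k l m : Fin n} (h : ({i, j, k, l, m} : Finset (Fin n)).card = 5) :
    gh (i, j, k, l) * gh (i, j, l, m) * gh (j, k, l, m) * (gh (i, j, k, m))⁻¹ *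
      (gh (i, k, l, m))⁻¹ = 1 := by
  have := gh_rel (Or.inl (Or.inr ⟨i, j, k, l, m, h, rfl⟩))
  simp only [map_mul, map_inv] at this
  exact this

/-- membership predicate for the edge `[ab,cd]` -/
def PH {n : ℕ} (H : Subgroup (GammaHat n)) (a b c d : ℕ) : Prop :=
  ∀ (ha : a < n) (hb : b < n) (hc : c < n) (hd : d < n),
    gh ((⟨a, ha⟩, ⟨c, hc⟩, ⟨b, hb⟩, ⟨d, hd⟩) : Quad n) ∈ H

theorem PH_sw2 {n : ℕ} (H : Subgroup (GammaHat n)) {a b c d : ℕ} (h : PH H a b c d) :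
    PH H c d a b := by
  intro hc hd ha hb
  rw [gh_rev, H.inv_mem_iff, gh_rot, gh_rot, inv_inv]
  exact h ha hb hc hd

theorem PH_cl {n : ℕ} (H : Subgroup (GammaHat n)) : Cl n (PH H) where
  sw1 := by
    intro a b c d h hb ha hc hd
    rw [gh_rev, gh_rot, inv_inv]
    exact h ha hb hc hd
  sw2 := PH_sw2 H
  pent := by
    intro i j k l m hi hj hk hl hm h1 h2 h3 h4 h5 h6 h7 h8 h9 h10 e1 e2 e3 e4
    have e1 := e1 hi hk hj hl
    have e2 := e2 hj hl hk hm
    have e3 := PH_sw2 H e3 hi hl hk hm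
    have e4 := e4 hi hl hj hm
    apply PH_sw2 H
    intro _ _ _ _
    have h := gh_pent (n := n) (i := ⟨i, hi⟩) (j := ⟨j, hj⟩) (k := ⟨k, hk⟩) (l := ⟨l, hl⟩)
      (m := ⟨m, hm⟩) (mk5 (by simp only [ne_eq, Fin.mk.injEq]; tauto))
    rw [mul_inv_eq_one, mul_inv_eq_iff_eq_mul, ← inv_mul_eq_iff_eq_mul] at h
    rw [← h]
    exact H.mul_mem (H.inv_mem e3) (H.mul_mem (H.mul_mem e1 e4) e2)

theorem gammaHat_min_generators (n : ℕ) (hn : 4 ≤ n) :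
    (∀ S : Set (GammaHat n), S.Finite → Subgroup.closure S = ⊤ →
      n.choose 3 - 1 ≤ S.ncard) ∧
    (∃ S : Set (GammaHat n), S.Finite ∧ Subgroup.closure S = ⊤ ∧
      S.ncard = n.choose 3 - 1) := by
  classical
  refine ⟨fun S hS hc => lower hn S hS hc, ?_⟩
  obtain ⟨S, hS, h⟩ := All_all (n := n) (m := n) (by omega) le_rfl
  let f : ℕ × ℕ × ℕ × ℕ → GammaHat n := fun s =>
    if hs : s.1 < n ∧ s.2.1 < n ∧ s.2.2.1 < n ∧ s.2.2.2 < n then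
      gh ((⟨s.1, hs.1⟩, ⟨s.2.2.1, hs.2.2.1⟩, ⟨s.2.1, hs.2.1⟩, ⟨s.2.2.2, hs.2.2.2⟩) : Quad n)
    else 1
  let F : Finset (GammaHat n) := S.image f
  have hFc : Subgroup.closure (F : Set (GammaHat n)) = ⊤ := by
    have hall := h (PH (Subgroup.closure (F : Set (GammaHat n)))) (PH_cl _) trivial (by
      intro s hs ha hb hc hd
      apply Subgroup.subset_closure
      have : f s ∈ F := Finset.mem_image_of_mem f hs
      simpa only [f, ha, hb, hc, hd, and_self, dif_pos, Finset.mem_coe] using this)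
    rw [eq_top_iff, ← PresentedGroup.closure_range_of, Subgroup.closure_le]
    rintro _ ⟨⟨i, j, k, l⟩, rfl⟩
    change gh (i, j, k, l) ∈ _
    by_cases hq : qDistinct (i, j, k, l)
    · have hd := card4 hq
      simp only [ne_eq, Fin.ext_iff] at hd
      exact hall i k j l i.2 k.2 j.2 l.2 (by omega) (by omega) (by omega) (by omega) (by omega)
        (by omega) i.2 k.2 j.2 l.2
    · rw [gh_not hq]; exact Subgroup.one_mem _
  refine ⟨F, F.finite_toSet, hFc, le_antisymm ?_ (lower hn _ F.finite_toSet hFc)⟩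
  rw [Set.ncard_coe_finset]
  exact Finset.card_image_le.trans hS
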